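/- The 8×8 symbol matrix of the first-order error evolution system (in Fourier variable k ∈ ℝ³), namely the linear map sending (K̂_B, K̂_E, D̂_B, D̂_E) to (ic k × K̂_E + ic k D̂_E, −ic k × K̂_B − ic k D̂_B, −ic k · K̂_E, ic k · K̂_B), has characteristic polynomial (λ² + c²|k|²)⁴; i.e., its eigenvalues are ±ic|k|, each with algebraic multiplicity four. -/

import Mathlib

noncomputable section
open Polynomial

/-- the 8×8 Fourier symbol matrix of the error evolution system, acting on
(K̂_B, K̂_E, D̂_B, D̂_E) ∈ ℂ³ × ℂ³ × ℂ × ℂ (coordinates 0-2, 3-5, 6, 7). -/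
def errorSymbol (c : ℝ) (k : Fin 3 → ℝ) : Matrix (Fin 8) (Fin 8) ℂ :=
  let e : ℂ := Complex.I * c
  let k0 : ℂ := k 0
  let k1 : ℂ := k 1
  let k2 : ℂ := k 2
  !![0, 0, 0, 0, -e*k2, e*k1, 0, e*k0;
     0, 0, 0, e*k2, 0, -e*k0, 0, e*k1;
     0, 0, 0, -e*k1, e*k0, 0, 0, e*k2;
     0, e*k2, -e*k1, 0, 0, 0, -e*k0, 0;
     -e*k2, 0, e*k0, 0, 0, 0, -e*k1, 0;
     e*k1, -e*k0, 0, 0, 0, 0, -e*k2, 0;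
     0, 0, 0, -e*k0, -e*k1, -e*k2, 0, 0;
     e*k0, e*k1, e*k2, 0, 0, 0, 0, 0]

/-!
In the coordinates `(D_B, K_B)` and `(D_E, K_E)`, read as complexified quaternions `s + v` with
scalar part `s` and vector part `v`, the system is `(B, E) ↦ (q E, -q B)`, where `q` is the purely
imaginary quaternion with vector part `i c k`, because
`q (s + v) = -(i c k · v) + (i c k × v + s i c k)`. Hence the symbol is block anti-diagonal, and its
characteristic polynomial is that of the product of the two blocks evaluated at `X ^ 2`. This
product is multiplication by `-q² = (i c)² |k|²`, a `4 × 4` scalar matrix.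
-/

open Matrix
open scoped Quaternion

section BlockAntidiagonal

variable {R m n : Type*} [CommRing R] [Fintype m] [Fintype n] [DecidableEq m] [DecidableEq n]

lemma expand_charpoly (p : ℕ) (M : Matrix n n R) :
    expand R p M.charpoly = (scalar n (X ^ p) - M.map C).det := by
  rw [charpoly, AlgHom.map_det]
  congr 1
  ext1 i j
  by_cases h : i = j <;> simp [h]

lemma charpoly_scalar (r : R) : (scalar n r).charpoly = (X - C r) ^ Fintype.card n := by
  simp [scalar_apply, charpoly_diagonal]

lemma X_pow_mul_charpoly_fromBlocks_zero₁₁_zero₂₂ (A : Matrix m n R) (B : Matrix n m R) :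
    X ^ Fintype.card m * (fromBlocks 0 A B 0).charpoly =
      X ^ Fintype.card n * expand R 2 (A * B).charpoly := by
  have htriangularize :
      (fromBlocks 0 A B 0).charmatrix * fromBlocks (scalar m X) 0 (B.map C) 1 =
        fromBlocks (scalar m (X ^ 2) - (A * B).map C) (-A.map C) 0 (scalar n X) := by
    rw [charmatrix_fromBlocks, fromBlocks_multiply]
    congr 1
    · simp [sub_eq_add_neg, sq]
    · simp
    · simp [smul_eq_mul_diagonal, ← smul_eq_diagonal_mul]
    · simp
  have hdet := congrArg det htriangularize
  rw [det_mul, det_fromBlocks_zero₁₂, det_fromBlocks_zero₂₁, ← expand_charpoly] at hdet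
  simpa [charpoly, mul_comm] using hdet

lemma charpoly_fromBlocks_zero₁₁_zero₂₂ (A B : Matrix n n R) :
    (fromBlocks 0 A B 0).charpoly = expand R 2 (A * B).charpoly :=
  (isRegular_X_pow _).left (X_pow_mul_charpoly_fromBlocks_zero₁₁_zero₂₂ A B)

lemma charpoly_fromBlocks_zero₁₁_zero₂₂_of_mul_eq_scalar {A B : Matrix n n R} {r : R}
    (h : A * B = scalar n r) :
    (fromBlocks 0 A B 0).charpoly = (X ^ 2 - C r) ^ Fintype.card n := by
  rw [charpoly_fromBlocks_zero₁₁_zero₂₂, h, charpoly_scalar, map_pow, map_sub, expand_X, expand_C]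

lemma charpoly_fromBlocks_leftMulMatrix {S : Type*} [Ring S] [Algebra R S]
    (b : Module.Basis n R S) {x y : S} {r : R} (h : x * y = algebraMap R S r) :
    (fromBlocks 0 (Algebra.leftMulMatrix b x) (Algebra.leftMulMatrix b y) 0).charpoly =
      (X ^ 2 - C r) ^ Fintype.card n := by
  apply charpoly_fromBlocks_zero₁₁_zero₂₂_of_mul_eq_scalar
  rw [← map_mul, h, AlgHom.commutes]
  rfl

end BlockAntidiagonal

section QuaternionAlgebra

variable {R : Type*} [CommRing R]

lemma leftMulMatrix_basisOneIJK {c₁ c₂ c₃ : R} (q : ℍ[R,c₁,c₂,c₃]) :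
    Algebra.leftMulMatrix (QuaternionAlgebra.basisOneIJK c₁ c₂ c₃) q =
      !![q.re, c₁ * q.imI, c₃ * q.imJ, c₂ * c₃ * q.imJ - c₁ * c₃ * q.imK;
         q.imI, q.re + c₂ * q.imI, c₃ * q.imK, -(c₃ * q.imJ);
         q.imJ, c₂ * q.imJ - c₁ * q.imK, q.re, c₁ * q.imI;
         q.imK, -q.imJ, q.imI, q.re + c₂ * q.imI] := by
  ext i j
  rw [Algebra.leftMulMatrix_eq_repr_mul]
  fin_cases i <;> fin_cases j <;> simp [QuaternionAlgebra.basisOneIJK]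

lemma quaternionAlgebra_mul_neg_self_of_re_eq_zero {c₁ c₃ : R} {q : ℍ[R,c₁,c₃]} (hq : q.re = 0) :
    q * -q = algebraMap R ℍ[R,c₁,c₃]
      (c₁ * c₃ * q.imK ^ 2 - c₁ * q.imI ^ 2 - c₃ * q.imJ ^ 2) := by
  rw [QuaternionAlgebra.algebraMap_eq]
  ext <;> simp [hq] <;> ring

end QuaternionAlgebra

/-- Groups the coordinates `(K_B, K_E, D_B, D_E)` of `errorSymbol` into the two quaternions
`(D_B, K_B)` and `(D_E, K_E)`, scalar part first. -/
def quaternionCoordEquiv : Fin 4 ⊕ Fin 4 ≃ Fin 8 :=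
  Equiv.ofBijective (Sum.elim ![6, 0, 1, 2] ![7, 3, 4, 5]) (by decide)

/-- The purely imaginary complexified quaternion with vector part `i c k`. Left multiplication by
it couples `(D_B, K_B)` and `(D_E, K_E)` in `errorSymbol`. -/
def symbolQuaternion (c : ℝ) (k : Fin 3 → ℝ) : ℍ[ℂ,-1,-1] :=
  ⟨0, Complex.I * c * k 0, Complex.I * c * k 1, Complex.I * c * k 2⟩

lemma symbolQuaternion_mul_neg_self (c : ℝ) (k : Fin 3 → ℝ) :
    symbolQuaternion c k * -symbolQuaternion c k =
      algebraMap ℂ ℍ[ℂ,-1,-1] (-((c ^ 2 * (k 0 ^ 2 + k 1 ^ 2 + k 2 ^ 2) : ℝ) : ℂ)) := by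
  rw [quaternionAlgebra_mul_neg_self_of_re_eq_zero rfl]
  congr 1
  simp only [symbolQuaternion, mul_pow, Complex.I_sq]
  push_cast
  ring

lemma reindex_errorSymbol (c : ℝ) (k : Fin 3 → ℝ) :
    reindex quaternionCoordEquiv.symm quaternionCoordEquiv.symm (errorSymbol c k) =
      fromBlocks 0
        (Algebra.leftMulMatrix (QuaternionAlgebra.basisOneIJK _ _ _) (symbolQuaternion c k))
        (Algebra.leftMulMatrix (QuaternionAlgebra.basisOneIJK _ _ _) (-symbolQuaternion c k))
        0 := by
  rw [leftMulMatrix_basisOneIJK, leftMulMatrix_basisOneIJK]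
  ext (i | i) (j | j) <;> fin_cases i <;> fin_cases j <;>
    simp [errorSymbol, symbolQuaternion, quaternionCoordEquiv]

/-- the characteristic polynomial of the 8×8 symbol is
(λ² + c²|k|²)⁴, i.e. the eigenvalues are ±ic|k|, each with algebraic
multiplicity four. -/
theorem stmt_4 (c : ℝ) (hc : 0 < c) (k : Fin 3 → ℝ) :
    (errorSymbol c k).charpoly
      = (X ^ 2 + C ((c ^ 2 * (k 0 ^ 2 + k 1 ^ 2 + k 2 ^ 2) : ℝ) : ℂ)) ^ 4 := by
  rw [← charpoly_reindex quaternionCoordEquiv.symm, reindex_errorSymbol,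
    charpoly_fromBlocks_leftMulMatrix _ (symbolQuaternion_mul_neg_self c k), Fintype.card_fin,
    C_neg, sub_neg_eq_add]
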